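/- arXiv:0807.3632 — 2 statements merged into one kernel-verified Lean document; each statement's English description precedes it below -/
import Mathlib

section
/- Let G = (V,E) be a finite connected undirected graph with positive symmetric edge weights ω, let i ≠ j be vertices, and let U_k^{ij} denote the expected number of visits to vertex k (counting the visit at time 0) made by the random walk started at i before it first reaches j. Let V be the unit-current potential from i to j normalized so that V_j = 0. Then for every vertex k, V_k = U_k^{ij}/ω(k). -/
open Finset

variable {V : Type*}

/-- The total weight incident to a vertex: `ω(i) = Σ_l ω(i,l)`. -/
noncomputable def vWeight [Fintype V] (w : V → V → ℝ) (i : V) : ℝ :=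
  ∑ l, w i l

/-- The total weight of the graph (each edge counted once): `ω(G)`. -/
noncomputable def gWeight [Fintype V] (w : V → V → ℝ) : ℝ :=
  (∑ i, ∑ l, w i l) / 2

/-- Transition probabilities of the random walk on the weighted graph:
from `i`, move to `l` with probability `ω(i,l)/ω(i)`. -/
noncomputable def walkStep [Fintype V] (w : V → V → ℝ) (i l : V) : ℝ :=
  w i l / vWeight w i

/-- `w` is a system of positive symmetric edge weights on a finite connected undirected
graph: symmetric, nonnegative, zero on the diagonal (and on non-edges), and the graph
whose edges are the pairs with positive weight is connected. -/
def IsWeight [Fintype V] (w : V → V → ℝ) : Prop :=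
  (∀ a b, w a b = w b a) ∧ (∀ a b, 0 ≤ w a b) ∧ (∀ a, w a a = 0) ∧
    (∀ a b, Relation.ReflTransGen (fun x y => 0 < w x y) a b)

/-- `hitSurv p j n i` is the probability that the Markov chain with transition kernel `p`
started at `i` has not visited `j` at any of the times `0, 1, …, n`. -/
noncomputable def hitSurv {S : Type*} [Fintype S] [DecidableEq S] (p : S → S → ℝ) (j : S) :
    ℕ → S → ℝ
  | 0 => fun i => if i = j then 0 else 1
  | n + 1 => fun i => if i = j then 0 else ∑ l, p i l * hitSurv p j n l

/-- Expected hitting time of `j` from `i`: the expected number of steps for the chain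
started at `i` to first reach `j`, computed as `Σ_n P(T_j > n)`. -/
noncomputable def hitTime {S : Type*} [Fintype S] [DecidableEq S] (p : S → S → ℝ)
    (i j : S) : ℝ :=
  ∑' n : ℕ, hitSurv p j n i

/-- A unit-current potential from `i` to `j`: Kirchhoff's equations when a unit current
enters at `i` and leaves at `j`. -/
def IsUnitPotential [Fintype V] (w : V → V → ℝ) (i j : V) (φ : V → ℝ) : Prop :=
  (∀ k, k ≠ i → k ≠ j → ∑ l, w k l * (φ k - φ l) = 0) ∧
    (∑ l, w i l * (φ i - φ l) = 1) ∧
    (∑ l, w j l * (φ j - φ l) = -1)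

/-- `R` is the effective-resistance matrix of the weighted graph `w`:
`R a a = 0`, and for `a ≠ b`, `R a b = V_a - V_b` for a unit-current potential
from `a` to `b`. -/
def IsResistance [Fintype V] (w : V → V → ℝ) (R : V → V → ℝ) : Prop :=
  (∀ a, R a a = 0) ∧
    ∀ a b, a ≠ b → ∃ φ, IsUnitPotential w a b φ ∧ R a b = φ a - φ b

/-- The weight function of an unweighted graph: weight `1` on edges, `0` elsewhere. -/
noncomputable def aw (G : SimpleGraph V) [DecidableRel G.Adj] (a b : V) : ℝ :=
  if G.Adj a b then 1 else 0

/-- Probability of a given trajectory: `trajProb p i xs` is the probability that the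
chain started at `i` successively visits the vertices of the list `xs`. -/
noncomputable def trajProb {S : Type*} [Fintype S] (p : S → S → ℝ) : S → List S → ℝ
  | _, [] => 1
  | i, x :: xs => p i x * trajProb p x xs

/-- Probability that the walk started at `i` has not visited every vertex by time `n`. -/
noncomputable def notCoveredProb [Fintype V] [DecidableEq V] (p : V → V → ℝ) (n : ℕ)
    (i : V) : ℝ :=
  ∑ xs : Fin n → V, trajProb p i (List.ofFn xs) *
    (if (i :: List.ofFn xs).toFinset = Finset.univ then 0 else 1)

/-- The cover time from `i`: the expected number of steps for the walk started at `i`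
to have visited every vertex, computed as `Σ_n P(T_cov > n)`. -/
noncomputable def coverTime [Fintype V] [DecidableEq V] (p : V → V → ℝ) (i : V) : ℝ :=
  ∑' n : ℕ, notCoveredProb p n i

/-- `visitSurv p j k n i` is the probability that the chain started at `i` is at `k` at
time `n` without having visited `j` at any of the times `0, …, n`. -/
noncomputable def visitSurv [Fintype V] [DecidableEq V] (p : V → V → ℝ) (j k : V) :
    ℕ → V → ℝ
  | 0 => fun i => if i = j then 0 else if i = k then 1 else 0
  | n + 1 => fun i => if i = j then 0 else ∑ l, p i l * visitSurv p j k n l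

/-- `expVisits p i j k` is the expected number of visits to `k` (counting time `0`) of
the chain started at `i` strictly before its first visit to `j`. -/
noncomputable def expVisits [Fintype V] [DecidableEq V] (p : V → V → ℝ) (i j k : V) : ℝ :=
  ∑' n : ℕ, visitSurv p j k n i

/-- `reachBeforeAux p i j n l` is the probability that the walk started at `l` reaches `j`
within `n` steps without visiting `i` first. -/
noncomputable def reachBeforeAux [Fintype V] [DecidableEq V] (p : V → V → ℝ) (i j : V) :
    ℕ → V → ℝ
  | 0 => fun l => if l = j then 1 else 0
  | n + 1 => fun l =>
      if l = j then 1 else if l = i then 0 else ∑ m, p l m * reachBeforeAux p i j n m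

/-- The probability that the walk started at `i` reaches `j` before returning to `i`:
one step from `i` to `l`, then reach `j` before `i` (monotone limit in `n`). -/
noncomputable def escapeProb [Fintype V] [DecidableEq V] (p : V → V → ℝ) (i j : V) : ℝ :=
  ∑ l, p i l * ⨆ n, reachBeforeAux p i j n l

/-- `hitSurvSet p F n x` is the probability that the chain started at `x` has not visited
the set `F` at any of the times `0, …, n`. -/
noncomputable def hitSurvSet {S : Type*} [Fintype S] (p : S → S → ℝ) (F : S → Prop)
    [DecidablePred F] : ℕ → S → ℝ
  | 0 => fun x => if F x then 0 else 1
  | n + 1 => fun x => if F x then 0 else ∑ y, p x y * hitSurvSet p F n y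

/-- Expected hitting time of the set `F` from `x`, computed as `Σ_n P(T_F > n)`. -/
noncomputable def hitTimeSet {S : Type*} [Fintype S] (p : S → S → ℝ) (F : S → Prop)
    [DecidablePred F] (x : S) : ℝ :=
  ∑' n : ℕ, hitSurvSet p F n x

/-- The associated chain `𝒢` on pairs `(P, i)` (visited set, current vertex): from
`(P, i)` it moves to `(P ∪ {j}, j)` with probability `ω(i,j)/ω(i)`. -/
noncomputable def pairStep [Fintype V] [DecidableEq V] (w : V → V → ℝ)
    (s t : Finset V × V) : ℝ :=
  if t.1 = insert t.2 s.1 then walkStep w s.2 t.2 else 0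

/-- `exitProbAux p P j n i` is the probability that the walk started at `i` leaves `P`
within `n` steps and that the first vertex visited outside `P` is `j`. -/
noncomputable def exitProbAux [Fintype V] [DecidableEq V] (p : V → V → ℝ) (P : Finset V)
    (j : V) : ℕ → V → ℝ
  | 0 => fun i => if i ∈ P then 0 else if i = j then 1 else 0
  | n + 1 => fun i =>
      if i ∈ P then ∑ l, p i l * exitProbAux p P j n l else if i = j then 1 else 0

/-- The probability that the first vertex outside `P` visited by the walk started at `i`
is `j` (monotone limit in the number of allowed steps). -/
noncomputable def exitProb [Fintype V] [DecidableEq V] (p : V → V → ℝ) (P : Finset V)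
    (i j : V) : ℝ :=
  ⨆ n, exitProbAux p P j n i

/-- The negated weighted Laplacian `Δ` of the weighted graph `w` on `Fin n`. -/
noncomputable def negLaplacian (n : ℕ) (w : Fin n → Fin n → ℝ) :
    Matrix (Fin n) (Fin n) ℝ :=
  Matrix.of fun k l => if k = l then -(∑ m, w k m) else w k l

/-- `Δ₂`: the negated weighted Laplacian with its first row replaced by the first row of
the identity matrix. -/
noncomputable def delta2 (n : ℕ) (hn : 0 < n) (w : Fin n → Fin n → ℝ) :
    Matrix (Fin n) (Fin n) ℝ :=
  (negLaplacian n w).updateRow ⟨0, hn⟩ (fun l => if l = ⟨0, hn⟩ then 1 else 0)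

/-- The weight function obtained from `w` by adding weight `u` on the edge `{a, b}`. -/
noncomputable def addEdge [DecidableEq V] (w : V → V → ℝ) (a b : V) (u : ℝ)
    (x y : V) : ℝ :=
  w x y + (if (x = a ∧ y = b) ∨ (x = b ∧ y = a) then u else 0)

/-!
If the walk started at `i` and killed at `j` makes `U k` expected visits to `k`, then splitting
each visit according to the preceding step gives `U k = δ i k + ∑ l, U l * p l k` for `k ≠ j`.
Since `ω l * p l k = w l k = w k l`, this says precisely that `U / ω` is grounded at `j` and carries
the current of a unit source at `i`; by the minimum principle there is only one such function.
The potential itself guarantees that `U` is finite: it is nonnegative, so by induction `ω * φ`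
bounds the expected number of visits up to any time `N`.
-/

section Network

variable [Fintype V] {w : V → V → ℝ} {j : V}

/-- The net current flowing out of the vertex `a` at voltages `f`, that is, the weighted Laplacian
of `f` at `a`, with the sign for which it is nonnegative where `f` is maximal. -/
def netCurrent (w : V → V → ℝ) (f : V → ℝ) (a : V) : ℝ :=
  ∑ l, w a l * (f a - f l)

theorem netCurrent_sub (w : V → V → ℝ) (f g : V → ℝ) (a : V) :
    netCurrent w (f - g) a = netCurrent w f a - netCurrent w g a := by
  rw [netCurrent, netCurrent, netCurrent, ← sum_sub_distrib]
  exact sum_congr rfl fun l _ => by rw [Pi.sub_apply, Pi.sub_apply]; ring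

theorem vWeight_pos_of_reflTransGen (hnonneg : ∀ a b, 0 ≤ w a b) {a b : V} (hab : a ≠ b)
    (hreach : Relation.ReflTransGen (fun x y => 0 < w x y) a b) : 0 < vWeight w a := by
  obtain rfl | ⟨c, hac, -⟩ := hreach.cases_head
  · exact absurd rfl hab
  · exact sum_pos' (fun l _ => hnonneg a l) ⟨c, mem_univ c, hac⟩

theorem vWeight_mul_walkStep (hnonneg : ∀ a b, 0 ≤ w a b) (a b : V) :
    vWeight w a * walkStep w a b = w a b :=
  mul_div_cancel_of_imp' fun h =>
    (sum_eq_zero_iff_of_nonneg fun l _ => hnonneg a l).1 h b (mem_univ b)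

theorem walkStep_nonneg (hnonneg : ∀ a b, 0 ≤ w a b) (a b : V) : 0 ≤ walkStep w a b :=
  div_nonneg (hnonneg a b) (sum_nonneg fun l _ => hnonneg a l)

/-- The walk steps *into* `a` here: symmetry of the weights turns the backward equation of a
potential into the forward equation of `ω * f`. -/
theorem netCurrent_eq_sub_sum_mul_walkStep (hsymm : ∀ a b, w a b = w b a)
    (hnonneg : ∀ a b, 0 ≤ w a b) (f : V → ℝ) (a : V) :
    netCurrent w f a = vWeight w a * f a - ∑ l, vWeight w l * f l * walkStep w l a := by
  have hstep : ∀ l, vWeight w l * f l * walkStep w l a = w a l * f l := fun l => by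
    rw [mul_right_comm, vWeight_mul_walkStep hnonneg, hsymm]
  simp only [hstep, netCurrent, mul_sub, sum_sub_distrib, ← sum_mul]
  rw [vWeight]

theorem eq_of_netCurrent_nonneg_of_forall_le (hnonneg : ∀ a b, 0 ≤ w a b) {f : V → ℝ} {a b : V}
    (hmin : ∀ l, f a ≤ f l) (hf : 0 ≤ netCurrent w f a) (hab : 0 < w a b) : f b = f a := by
  have hterm : ∀ l ∈ univ, w a l * (f a - f l) ≤ 0 := fun l _ =>
    mul_nonpos_of_nonneg_of_nonpos (hnonneg a l) (sub_nonpos.2 (hmin l))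
  have hzero : w a b * (f a - f b) = 0 :=
    (sum_eq_zero_iff_of_nonpos hterm).1 ((sum_nonpos hterm).antisymm hf) b (mem_univ b)
  exact (sub_eq_zero.1 ((mul_eq_zero.1 hzero).resolve_left hab.ne')).symm

theorem nonneg_of_netCurrent_nonneg (hnonneg : ∀ a b, 0 ≤ w a b)
    (hreach : ∀ a, Relation.ReflTransGen (fun x y => 0 < w x y) a j) {f : V → ℝ}
    (hj : 0 ≤ f j) (hf : ∀ a, a ≠ j → 0 ≤ netCurrent w f a) (a : V) : 0 ≤ f a := by
  have : Nonempty V := ⟨j⟩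
  obtain ⟨m, hm⟩ := Finite.exists_min f
  refine le_trans ?_ (hm a)
  by_contra! hneg
  -- The set where `f` attains its negative minimum misses `j`, so it is closed under edges.
  have hconst : ∀ b, Relation.ReflTransGen (fun x y => 0 < w x y) m b → f b = f m := by
    intro b hb
    induction hb with
    | refl => rfl
    | @tail b c _ hbc ih =>
      have hbj : b ≠ j := by rintro rfl; linarith
      rw [← ih] at hm ⊢
      exact eq_of_netCurrent_nonneg_of_forall_le hnonneg hm (hf b hbj) hbc
  exact (hj.trans_eq (hconst j (hreach m))).not_gt hneg

theorem eq_of_netCurrent_eq (hnonneg : ∀ a b, 0 ≤ w a b)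
    (hreach : ∀ a, Relation.ReflTransGen (fun x y => 0 < w x y) a j) {f g : V → ℝ}
    (hj : f j = g j) (hfg : ∀ a, a ≠ j → netCurrent w f a = netCurrent w g a) : f = g := by
  have hle : ∀ f g : V → ℝ, f j = g j → (∀ a, a ≠ j → netCurrent w f a = netCurrent w g a) →
      f ≤ g := fun f g hj hfg a => sub_nonneg.1 <|
    nonneg_of_netCurrent_nonneg hnonneg hreach (f := g - f) (sub_nonneg.2 hj.le)
      (fun b hb => by rw [netCurrent_sub, hfg b hb, sub_self]) a
  exact (hle f g hj hfg).antisymm (hle g f hj.symm fun a ha => (hfg a ha).symm)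

end Network

section KilledChain

variable [Fintype V] [DecidableEq V] {p : V → V → ℝ} {i j k : V}

theorem visitSurv_start_eq_zero (p : V → V → ℝ) (j k : V) (n : ℕ) : visitSurv p j k n j = 0 := by
  cases n <;> simp only [visitSurv, if_true]

theorem visitSurv_target_eq_zero (p : V → V → ℝ) (j : V) (n : ℕ) (i : V) :
    visitSurv p j j n i = 0 := by
  induction n generalizing i with
  | zero => simp only [visitSurv, ite_eq_left_iff]; exact fun h => if_neg h
  | succ n ih => simp only [visitSurv, ih, mul_zero, sum_const_zero, ite_self]

theorem visitSurv_nonneg (hp : ∀ a b, 0 ≤ p a b) (j k : V) (n : ℕ) (i : V) :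
    0 ≤ visitSurv p j k n i := by
  induction n generalizing i with
  | zero => simp only [visitSurv]; split_ifs <;> norm_num
  | succ n ih =>
    simp only [visitSurv]
    split_ifs
    · exact le_rfl
    · exact sum_nonneg fun l _ => mul_nonneg (hp i l) (ih l)

theorem visitSurv_zero_of_ne (p : V → V → ℝ) (hk : k ≠ j) (i : V) :
    visitSurv p j k 0 i = if i = k then 1 else 0 := by
  simp only [visitSurv]
  split_ifs <;> simp_all

/-- `visitSurv` is defined by splitting off the first step; this splits off the last one. -/
theorem visitSurv_succ_eq_sum_mul (p : V → V → ℝ) (hk : k ≠ j) (n : ℕ) (i : V) :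
    visitSurv p j k (n + 1) i = ∑ l, visitSurv p j l n i * p l k := by
  induction n generalizing i with
  | zero =>
    by_cases hi : i = j
    · simp [hi, visitSurv_start_eq_zero]
    · rw [visitSurv]
      simp only [visitSurv_zero_of_ne p hk]
      simp [visitSurv, hi]
  | succ n ih =>
    by_cases hi : i = j
    · simp [hi, visitSurv_start_eq_zero]
    · calc visitSurv p j k (n + 2) i
          = ∑ m, p i m * ∑ l, visitSurv p j l n m * p l k := by
            rw [visitSurv]; simp only [if_neg hi, ih]
        _ = ∑ l, (∑ m, p i m * visitSurv p j l n m) * p l k := by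
            simp only [mul_sum, sum_mul, mul_assoc]; exact sum_comm
        _ = ∑ l, visitSurv p j l (n + 1) i * p l k := by
            simp only [visitSurv, if_neg hi]

theorem sum_range_succ_visitSurv (p : V → V → ℝ) (hk : k ≠ j) (N : ℕ) (i : V) :
    ∑ n ∈ range (N + 1), visitSurv p j k n i =
      (if i = k then 1 else 0) + ∑ l, (∑ n ∈ range N, visitSurv p j l n i) * p l k := by
  simp only [sum_range_succ', visitSurv_zero_of_ne p hk, visitSurv_succ_eq_sum_mul p hk, sum_mul]
  rw [sum_comm, add_comm]

theorem sum_range_visitSurv_le (hp : ∀ a b, 0 ≤ p a b) {m : V → ℝ} (hm : ∀ a, 0 ≤ m a)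
    (hsuper : ∀ a, a ≠ j → (if i = a then 1 else 0) + ∑ l, m l * p l a ≤ m a) (N : ℕ) (k : V) :
    ∑ n ∈ range N, visitSurv p j k n i ≤ m k := by
  induction N generalizing k with
  | zero => exact hm k
  | succ N ih =>
    obtain rfl | hk := eq_or_ne k j
    · simpa only [visitSurv_target_eq_zero, sum_const_zero] using hm k
    · rw [sum_range_succ_visitSurv p hk]
      refine le_trans ?_ (hsuper k hk)
      gcongr with l
      · exact hp l k
      · exact ih l

theorem summable_visitSurv (hp : ∀ a b, 0 ≤ p a b) {m : V → ℝ} (hm : ∀ a, 0 ≤ m a)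
    (hsuper : ∀ a, a ≠ j → (if i = a then 1 else 0) + ∑ l, m l * p l a ≤ m a) (k : V) :
    Summable fun n => visitSurv p j k n i :=
  summable_of_sum_range_le (fun n => visitSurv_nonneg hp j k n i) fun N =>
    sum_range_visitSurv_le hp hm hsuper N k

theorem expVisits_target_eq_zero (p : V → V → ℝ) (i j : V) : expVisits p i j j = 0 := by
  simp only [expVisits, visitSurv_target_eq_zero, tsum_zero]

theorem expVisits_eq_ite_add_sum_mul (hsum : ∀ l, Summable fun n => visitSurv p j l n i)
    (hk : k ≠ j) :
    expVisits p i j k = (if i = k then 1 else 0) + ∑ l, expVisits p i j l * p l k := by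
  simp only [expVisits]
  rw [(hsum k).tsum_eq_zero_add, visitSurv_zero_of_ne p hk]
  simp only [visitSurv_succ_eq_sum_mul p hk, ← tsum_mul_right]
  rw [Summable.tsum_finsetSum fun l _ => (hsum l).mul_right (p l k)]

end KilledChain

section Potential

variable [Fintype V] [DecidableEq V] {w : V → V → ℝ} {i j : V}

theorem IsUnitPotential.netCurrent_eq_ite {φ : V → ℝ} (hφ : IsUnitPotential w i j φ) {a : V}
    (ha : a ≠ j) : netCurrent w φ a = if i = a then 1 else 0 := by
  split_ifs with hia
  · exact hia ▸ hφ.2.1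
  · exact hφ.1 a (Ne.symm hia) ha

theorem summable_visitSurv_walkStep (hsymm : ∀ a b, w a b = w b a) (hnonneg : ∀ a b, 0 ≤ w a b)
    {f : V → ℝ} (hf : ∀ a, 0 ≤ f a)
    (hcurrent : ∀ a, a ≠ j → (if i = a then 1 else 0) ≤ netCurrent w f a) (k : V) :
    Summable fun n => visitSurv (walkStep w) j k n i := by
  refine summable_visitSurv (walkStep_nonneg hnonneg) (m := fun a => vWeight w a * f a)
    (fun a => mul_nonneg (sum_nonneg fun l _ => hnonneg a l) (hf a)) (fun a ha => ?_) k
  rw [← le_sub_iff_add_le, ← netCurrent_eq_sub_sum_mul_walkStep hsymm hnonneg]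
  exact hcurrent a ha

theorem netCurrent_expVisits_div_vWeight (hsymm : ∀ a b, w a b = w b a)
    (hnonneg : ∀ a b, 0 ≤ w a b) (hpos : ∀ a, a ≠ j → 0 < vWeight w a)
    (hsum : ∀ l, Summable fun n => visitSurv (walkStep w) j l n i) {a : V} (ha : a ≠ j) :
    netCurrent w (fun l => expVisits (walkStep w) i j l / vWeight w l) a =
      if i = a then 1 else 0 := by
  have hcancel : ∀ l, vWeight w l * (expVisits (walkStep w) i j l / vWeight w l) =
      expVisits (walkStep w) i j l := by
    intro l
    obtain rfl | hl := eq_or_ne l j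
    · rw [expVisits_target_eq_zero, zero_div, mul_zero]
    · exact mul_div_cancel₀ _ (hpos l hl).ne'
  simp only [netCurrent_eq_sub_sum_mul_walkStep hsymm hnonneg, hcancel]
  exact sub_eq_of_eq_add (expVisits_eq_ite_add_sum_mul hsum ha)

theorem potential_eq_normalized_visits_general (hsymm : ∀ a b, w a b = w b a)
    (hnonneg : ∀ a b, 0 ≤ w a b)
    (hreach : ∀ a, Relation.ReflTransGen (fun x y => 0 < w x y) a j) {φ : V → ℝ}
    (hφ : IsUnitPotential w i j φ) (hφj : φ j = 0) (k : V) :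
    φ k = expVisits (walkStep w) i j k / vWeight w k := by
  have hpos : ∀ a, a ≠ j → 0 < vWeight w a := fun a ha =>
    vWeight_pos_of_reflTransGen hnonneg ha (hreach a)
  have hφ_nonneg : ∀ a, 0 ≤ φ a :=
    nonneg_of_netCurrent_nonneg hnonneg hreach hφj.ge fun a ha => by
      rw [hφ.netCurrent_eq_ite ha]; split_ifs <;> norm_num
  have hsum : ∀ l, Summable fun n => visitSurv (walkStep w) j l n i :=
    summable_visitSurv_walkStep hsymm hnonneg hφ_nonneg fun a ha => (hφ.netCurrent_eq_ite ha).ge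
  have huniq : φ = fun l => expVisits (walkStep w) i j l / vWeight w l :=
    eq_of_netCurrent_eq hnonneg hreach (by rw [hφj, expVisits_target_eq_zero, zero_div])
      fun a ha => (hφ.netCurrent_eq_ite ha).trans
        (netCurrent_expVisits_div_vWeight hsymm hnonneg hpos hsum ha).symm
  exact congrFun huniq k

end Potential

/-- The unit-current potential normalized by `V_j = 0` satisfies
`V_k = U_k^{ij}/ω(k)`, where `U_k^{ij}` is the expected number of visits to `k`
before first reaching `j`, for the walk started at `i`. -/
theorem potential_eq_normalized_visits
    {V : Type*} [Fintype V] [DecidableEq V] (w : V → V → ℝ) (hw : IsWeight w)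
    (i j : V) (hij : i ≠ j) (φ : V → ℝ) (hφ : IsUnitPotential w i j φ)
    (hφj : φ j = 0) (k : V) :
    φ k = expVisits (walkStep w) i j k / vWeight w k :=
  potential_eq_normalized_visits_general hw.1 hw.2.1 (fun a => hw.2.2.2 a j) hφ hφj k
end

section
/- Let G = (V,E) be a finite connected undirected graph with positive symmetric edge weights ω, and let i ≠ j be vertices. The probability that the random walk started at i reaches j before returning to i equals 2·ω(G)/(ω(i)·κ_{ij}) = 1/(ω(i)·R_{ij}), where κ_{ij} is the commute time between i and j and R_{ij} the effective resistance. -/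
open Finset

variable {V : Type*}

/-!
The quantity `f - p *ᵥ f` vanishes exactly where `f` has the mean value property, and by the maximum
principle a function is determined by its mean value defect off a boundary set together with its
values on that set. Hence any `f` with the mean value property off `{i, j}` is affine in the
probability `u` of reaching `j` before `i`, namely `f = f i - (f i - f j) u`; comparing defects at
`i` gives `(f i - f j) * escapeProb p i j = f i - (p *ᵥ f) i`.

For `f = h_{·j} - h_{·i}` the left factor is the commute time and the right-hand side is the mean
return time to `i`, which Kac's formula, for the stationary measure `ω`, evaluates to
`2 ω(G) / ω(i)`. For a unit potential the left factor is the effective resistance and the right-hand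
side is `1 / ω(i)`.
-/

open Matrix

/-- The set `B` can be reached from every state through transitions of positive probability (or,
for a weighted graph, along edges of positive weight). -/
def IsGloballyReachable (p : V → V → ℝ) (B : Set V) : Prop :=
  ∀ x, ∃ b ∈ B, Relation.ReflTransGen (fun a c => 0 < p a c) x b

section MaximumPrinciple

variable [Fintype V]

theorem of_mulVec_apply (p : V → V → ℝ) (f : V → ℝ) (x : V) :
    (of p *ᵥ f) x = ∑ l, p x l * f l :=
  rfl

variable [DecidableEq V] {p : V → V → ℝ} {B : Set V} {f g : V → ℝ}

theorem transition_nonneg (hp : of p ∈ rowStochastic ℝ V) (a b : V) : 0 ≤ p a b :=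
  nonneg_of_mem_rowStochastic hp

theorem sum_transition (hp : of p ∈ rowStochastic ℝ V) (a : V) : ∑ b, p a b = 1 :=
  sum_row_of_mem_rowStochastic hp a

theorem sub_mulVec_eq_sum (hp : of p ∈ rowStochastic ℝ V) (f : V → ℝ) (x : V) :
    f x - (of p *ᵥ f) x = ∑ l, p x l * (f x - f l) := by
  simp only [of_mulVec_apply, mul_sub, sum_sub_distrib, ← sum_mul, sum_transition hp, one_mul]

theorem eq_of_isMax_of_le_mulVec (hp : of p ∈ rowStochastic ℝ V) {x y : V} (hmax : ∀ l, f l ≤ f x)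
    (hx : f x ≤ (of p *ᵥ f) x) (hxy : 0 < p x y) : f y = f x := by
  have hterm : p x y * (f x - f y) ≤ 0 :=
    calc p x y * (f x - f y)
      _ ≤ ∑ l, p x l * (f x - f l) :=
        single_le_sum (f := fun l => p x l * (f x - f l))
          (fun l _ => mul_nonneg (transition_nonneg hp x l) (sub_nonneg.2 (hmax l)))
          (mem_univ y)
      _ = f x - (of p *ᵥ f) x := (sub_mulVec_eq_sum hp f x).symm
      _ ≤ 0 := sub_nonpos.2 hx
  exact (hmax y).antisymm (sub_nonpos.1 (nonpos_of_mul_nonpos_right hterm hxy))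

theorem le_of_le_mulVec (hp : of p ∈ rowStochastic ℝ V) (hB : IsGloballyReachable p B)
    (hf : ∀ x ∉ B, f x ≤ (of p *ᵥ f) x) {c : ℝ} (hc : ∀ b ∈ B, f b ≤ c) (x : V) : f x ≤ c := by
  have : Nonempty V := ⟨x⟩
  obtain ⟨m, hm⟩ := Finite.exists_max f
  -- The maximum propagates along a path from `m` until that path meets `B`.
  have hmax : ∃ b ∈ B, f b = f m := by
    obtain ⟨b, hbB, hmb⟩ := hB m
    suffices ∀ y, Relation.ReflTransGen (fun a c => 0 < p a c) y b →
        f y = f m → ∃ b ∈ B, f b = f m from this m hmb rfl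
    intro y hyb
    induction hyb using Relation.ReflTransGen.head_induction_on with
    | refl => exact fun hb => ⟨b, hbB, hb⟩
    | @head y z hyz _ ih =>
      intro hy
      by_cases hyB : y ∈ B
      · exact ⟨y, hyB, hy⟩
      · exact ih ((eq_of_isMax_of_le_mulVec hp (hy ▸ hm) (hf y hyB) hyz).trans hy)
  obtain ⟨b, hbB, hb⟩ := hmax
  exact (hm x).trans (hb ▸ hc b hbB)

theorem le_of_sub_mulVec_le (hp : of p ∈ rowStochastic ℝ V) (hB : IsGloballyReachable p B)
    (hdefect : ∀ x ∉ B, f x - (of p *ᵥ f) x ≤ g x - (of p *ᵥ g) x) (hfg : ∀ b ∈ B, f b ≤ g b) :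
    f ≤ g := by
  refine fun x => sub_nonpos.1 (le_of_le_mulVec (f := f - g) hp hB (fun y hy => ?_) ?_ x)
  · rw [mulVec_sub, Pi.sub_apply, Pi.sub_apply]
    linarith [hdefect y hy]
  · exact fun b hb => sub_nonpos.2 (hfg b hb)

theorem eq_of_sub_mulVec_eq (hp : of p ∈ rowStochastic ℝ V) (hB : IsGloballyReachable p B)
    (hdefect : ∀ x ∉ B, f x - (of p *ᵥ f) x = g x - (of p *ᵥ g) x) (hfg : ∀ b ∈ B, f b = g b) :
    f = g :=
  (le_of_sub_mulVec_le hp hB (fun x hx => (hdefect x hx).le) fun b hb => (hfg b hb).le).antisymm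
    (le_of_sub_mulVec_le hp hB (fun x hx => (hdefect x hx).ge) fun b hb => (hfg b hb).ge)

theorem exists_sub_mulVec_eq (hp : of p ∈ rowStochastic ℝ V) (hB : IsGloballyReachable p B)
    (s : V → ℝ) : ∃ g : V → ℝ, (∀ b ∈ B, g b = s b) ∧ ∀ x ∉ B, g x - (of p *ᵥ g) x = s x := by
  classical
  -- The matrix of the Dirichlet problem: identity rows on `B`, rows of `1 - p` off `B`.
  let A : Matrix V V ℝ := fun x => if x ∈ B then (1 : Matrix V V ℝ) x else (1 - of p) x
  have hA_mem : ∀ g, ∀ b ∈ B, (A *ᵥ g) b = g b := fun g b hb => by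
    calc (A *ᵥ g) b = ((1 : Matrix V V ℝ) *ᵥ g) b := by simp only [mulVec, A, if_pos hb]
      _ = g b := by rw [one_mulVec]
  have hA_notMem : ∀ g, ∀ x ∉ B, (A *ᵥ g) x = g x - (of p *ᵥ g) x := fun g x hx => by
    calc (A *ᵥ g) x = ((1 - of p) *ᵥ g) x := by simp only [mulVec, A, if_neg hx]
      _ = g x - (of p *ᵥ g) x := by rw [sub_mulVec, one_mulVec, Pi.sub_apply]
  have hinj : Function.Injective A.mulVec := fun f g hfg =>
    eq_of_sub_mulVec_eq hp hB (fun x hx => by rw [← hA_notMem f x hx, ← hA_notMem g x hx, hfg])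
      fun b hb => by rw [← hA_mem f b hb, ← hA_mem g b hb, hfg]
  obtain ⟨g, rfl⟩ := mulVec_surjective_iff_isUnit.2 (mulVec_injective_iff_isUnit.1 hinj) s
  exact ⟨g, fun b hb => (hA_mem g b hb).symm, fun x hx => (hA_notMem g x hx).symm⟩

end MaximumPrinciple

section HittingTime

variable [Fintype V] [DecidableEq V] {p : V → V → ℝ} {j k : V}

theorem hitSurv_self (p : V → V → ℝ) (j : V) (n : ℕ) : hitSurv p j n j = 0 := by
  cases n <;> exact if_pos rfl

theorem hitSurv_zero_of_ne (p : V → V → ℝ) (hk : k ≠ j) : hitSurv p j 0 k = 1 :=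
  if_neg hk

theorem hitSurv_succ_of_ne (p : V → V → ℝ) (hk : k ≠ j) (n : ℕ) :
    hitSurv p j (n + 1) k = (of p *ᵥ hitSurv p j n) k :=
  if_neg hk

theorem hitSurv_nonneg (hp : ∀ a b, 0 ≤ p a b) (j : V) (n : ℕ) (k : V) : 0 ≤ hitSurv p j n k := by
  induction n generalizing k with
  | zero => simp only [hitSurv]; split_ifs <;> norm_num
  | succ n ih =>
    obtain rfl | hk := eq_or_ne k j
    · exact (hitSurv_self p k _).ge
    · rw [hitSurv_succ_of_ne p hk]
      exact sum_nonneg fun l _ => mul_nonneg (hp k l) (ih l)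

theorem hitTime_self (p : V → V → ℝ) (j : V) : hitTime p j j = 0 := by
  simp only [hitTime, hitSurv_self, tsum_zero]

theorem sum_range_hitSurv_le (hp : ∀ a b, 0 ≤ p a b) {g : V → ℝ} (hg : 0 ≤ g)
    (hsuper : ∀ k ≠ j, 1 + (of p *ᵥ g) k ≤ g k) (n : ℕ) (k : V) :
    ∑ m ∈ range n, hitSurv p j m k ≤ g k := by
  induction n generalizing k with
  | zero => simpa only [range_zero, sum_empty, Pi.zero_apply] using hg k
  | succ n ih =>
    obtain rfl | hk := eq_or_ne k j
    · simpa only [hitSurv_self, sum_const_zero, Pi.zero_apply] using hg k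
    · calc ∑ m ∈ range (n + 1), hitSurv p j m k
        _ = 1 + ∑ l, p k l * ∑ m ∈ range n, hitSurv p j m l := by
          simp only [sum_range_succ', hitSurv_zero_of_ne p hk, hitSurv_succ_of_ne p hk,
            of_mulVec_apply, mul_sum]
          rw [sum_comm, add_comm]
        _ ≤ 1 + (of p *ᵥ g) k :=
          add_le_add_right (sum_le_sum fun l _ => mul_le_mul_of_nonneg_left (ih l) (hp k l)) 1
        _ ≤ g k := hsuper k hk

theorem summable_hitSurv (hp : of p ∈ rowStochastic ℝ V) (hj : IsGloballyReachable p {j}) (k : V) :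
    Summable fun n => hitSurv p j n k := by
  obtain ⟨g, hgj, hg⟩ := exists_sub_mulVec_eq hp hj (({j}ᶜ : Set V).indicator 1)
  have hdefect : ∀ k ∉ ({j} : Set V), g k - (of p *ᵥ g) k = 1 := fun k hk => by
    rw [hg k hk, Set.indicator_of_mem hk, Pi.one_apply]
  have hg_nonneg : 0 ≤ g := by
    refine le_of_sub_mulVec_le hp hj (fun k hk => ?_) (fun b hb => ?_)
    · rw [hdefect k hk, mulVec_zero, Pi.zero_apply, sub_zero]
      exact zero_le_one
    · rw [hgj b hb]
      exact Set.indicator_nonneg (fun _ _ => zero_le_one) b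
  exact summable_of_sum_range_le (hitSurv_nonneg (transition_nonneg hp) j · k)
    (sum_range_hitSurv_le (transition_nonneg hp) hg_nonneg
      (fun k hk => (sub_eq_iff_eq_add.1 (hdefect k hk)).ge) · k)

theorem hitTime_eq_one_add (hp : of p ∈ rowStochastic ℝ V) (hj : IsGloballyReachable p {j})
    (hk : k ≠ j) : hitTime p k j = 1 + (of p *ᵥ (hitTime p · j)) k := by
  have hsum := summable_hitSurv hp hj
  calc hitTime p k j
    _ = 1 + ∑' n, ∑ l, p k l * hitSurv p j n l := by
      rw [hitTime, (hsum k).tsum_eq_zero_add, hitSurv_zero_of_ne p hk]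
      simp only [hitSurv_succ_of_ne p hk, of_mulVec_apply]
    _ = 1 + ∑ l, p k l * hitTime p l j := by
      rw [Summable.tsum_finsetSum fun l _ => (hsum l).mul_left _]
      simp only [tsum_mul_left, hitTime]

/-- The expected number of steps for the chain started at `j` to come back to `j`: one step, then
the hitting time of `j`. -/
noncomputable def meanReturnTime (p : V → V → ℝ) (j : V) : ℝ :=
  1 + (of p *ᵥ (hitTime p · j)) j

theorem stationary_mul_meanReturnTime (hp : of p ∈ rowStochastic ℝ V)
    (hj : IsGloballyReachable p {j}) {μ : V → ℝ} (hμ : μ ᵥ* of p = μ) :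
    μ j * meanReturnTime p j = ∑ k, μ k := by
  set h : V → ℝ := (hitTime p · j) with h_def
  have hdefect : ∀ k, 1 + (of p *ᵥ h) k - h k = if k = j then meanReturnTime p j else 0 := by
    intro k
    split_ifs with hk
    · simp only [hk, h_def, hitTime_self, sub_zero, meanReturnTime]
    · exact sub_eq_zero.2 (hitTime_eq_one_add hp hj hk).symm
  have hstationary : ∑ k, μ k * (of p *ᵥ h) k = ∑ k, μ k * h k :=
    calc μ ⬝ᵥ of p *ᵥ h = μ ᵥ* of p ⬝ᵥ h := dotProduct_mulVec μ (of p) h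
      _ = μ ⬝ᵥ h := by rw [hμ]
  calc μ j * meanReturnTime p j
    _ = ∑ k, μ k * (1 + (of p *ᵥ h) k - h k) := by
      simp only [hdefect, mul_ite, mul_zero, sum_ite_eq', mem_univ, if_true]
    _ = ∑ k, μ k := by
      simp only [mul_sub, mul_add, mul_one, sum_sub_distrib, sum_add_distrib, hstationary,
        add_sub_cancel_right]

end HittingTime

section EscapeProbability

variable [Fintype V] [DecidableEq V] {p : V → V → ℝ} {i j k : V}

theorem reachBeforeAux_target (p : V → V → ℝ) (i j : V) (n : ℕ) :
    reachBeforeAux p i j n j = 1 := by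
  cases n <;> exact if_pos rfl

theorem reachBeforeAux_source (p : V → V → ℝ) (hij : i ≠ j) (n : ℕ) :
    reachBeforeAux p i j n i = 0 := by
  cases n <;> simp only [reachBeforeAux, if_neg hij, if_true]

theorem reachBeforeAux_zero_of_ne (p : V → V → ℝ) (i : V) (hkj : k ≠ j) :
    reachBeforeAux p i j 0 k = 0 :=
  if_neg hkj

theorem reachBeforeAux_succ_of_ne (p : V → V → ℝ) (hki : k ≠ i) (hkj : k ≠ j) (n : ℕ) :
    reachBeforeAux p i j (n + 1) k = (of p *ᵥ reachBeforeAux p i j n) k :=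
  (if_neg hkj).trans (if_neg hki)

theorem reachBeforeAux_nonneg (hp : ∀ a b, 0 ≤ p a b) (i j : V) (n : ℕ) (l : V) :
    0 ≤ reachBeforeAux p i j n l := by
  induction n generalizing l with
  | zero => simp only [reachBeforeAux]; split_ifs <;> norm_num
  | succ n ih =>
    simp only [reachBeforeAux]
    split_ifs
    exacts [zero_le_one, le_rfl, sum_nonneg fun m _ => mul_nonneg (hp l m) (ih m)]

theorem reachBeforeAux_le_one (hp : of p ∈ rowStochastic ℝ V) (i j : V) (n : ℕ) (l : V) :
    reachBeforeAux p i j n l ≤ 1 := by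
  induction n generalizing l with
  | zero => simp only [reachBeforeAux]; split_ifs <;> norm_num
  | succ n ih =>
    simp only [reachBeforeAux]
    split_ifs
    · exact le_rfl
    · exact zero_le_one
    · rw [← sum_transition hp l]
      exact sum_le_sum fun m _ => mul_le_of_le_one_right (transition_nonneg hp l m) (ih m)

theorem monotone_reachBeforeAux (hp : ∀ a b, 0 ≤ p a b) (i j : V) :
    Monotone (reachBeforeAux p i j) := by
  refine monotone_nat_of_le_succ fun n => ?_
  induction n with
  | zero =>
    intro l
    obtain rfl | hl := eq_or_ne l j
    · simp only [reachBeforeAux_target, le_refl]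
    · rw [reachBeforeAux_zero_of_ne p i hl]
      exact reachBeforeAux_nonneg hp i j 1 l
  | succ n ih =>
    intro l
    rw [reachBeforeAux, reachBeforeAux]
    beta_reduce
    split_ifs
    exacts [le_rfl, le_rfl, sum_le_sum fun m _ => mul_le_mul_of_nonneg_left (ih m) (hp l m)]

/-- The probability that the chain started at `l` reaches `j` before `i`, as the limit of the
probabilities of doing so within `n` steps. -/
noncomputable def reachBefore (p : V → V → ℝ) (i j l : V) : ℝ :=
  ⨆ n, reachBeforeAux p i j n l

theorem escapeProb_eq_mulVec (p : V → V → ℝ) (i j : V) :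
    escapeProb p i j = (of p *ᵥ reachBefore p i j) i :=
  rfl

theorem reachBefore_target (p : V → V → ℝ) (i j : V) : reachBefore p i j j = 1 := by
  simp only [reachBefore, reachBeforeAux_target, ciSup_const]

theorem reachBefore_source (p : V → V → ℝ) (hij : i ≠ j) : reachBefore p i j i = 0 := by
  simp only [reachBefore, reachBeforeAux_source p hij, ciSup_const]

theorem tendsto_reachBeforeAux (hp : of p ∈ rowStochastic ℝ V) (i j l : V) :
    Filter.Tendsto (reachBeforeAux p i j · l) Filter.atTop (nhds (reachBefore p i j l)) :=
  tendsto_atTop_ciSup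
    (fun _ _ hmn => monotone_reachBeforeAux (transition_nonneg hp) i j hmn l)
    ⟨1, Set.forall_mem_range.2 (reachBeforeAux_le_one hp i j · l)⟩

theorem reachBefore_eq_mulVec (hp : of p ∈ rowStochastic ℝ V) (hki : k ≠ i) (hkj : k ≠ j) :
    reachBefore p i j k = (of p *ᵥ reachBefore p i j) k := by
  refine tendsto_nhds_unique
    ((tendsto_reachBeforeAux hp i j k).comp (Filter.tendsto_add_atTop_nat 1)) ?_
  simp only [Function.comp_def, reachBeforeAux_succ_of_ne p hki hkj]
  exact tendsto_finsetSum _ fun l _ => (tendsto_reachBeforeAux hp i j l).const_mul _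

theorem mulVec_const_sub_mul (hp : of p ∈ rowStochastic ℝ V) (a c : ℝ) (u : V → ℝ) (k : V) :
    (of p *ᵥ fun l => a - c * u l) k = a - c * (of p *ᵥ u) k := by
  simp only [of_mulVec_apply, mul_sub, sum_sub_distrib, ← sum_mul, sum_transition hp, one_mul,
    mul_left_comm _ c, ← mul_sum]

theorem eq_sub_mul_reachBefore (hp : of p ∈ rowStochastic ℝ V) (hij : i ≠ j)
    (hB : IsGloballyReachable p {i, j}) {f : V → ℝ}
    (hf : ∀ k, k ≠ i → k ≠ j → f k = (of p *ᵥ f) k) :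
    f = fun l => f i - (f i - f j) * reachBefore p i j l := by
  refine eq_of_sub_mulVec_eq hp hB (fun k hk => ?_) ?_
  · have hki : k ≠ i := fun h => hk (Or.inl h)
    have hkj : k ≠ j := fun h => hk (Or.inr h)
    rw [mulVec_const_sub_mul hp, ← reachBefore_eq_mulVec hp hki hkj, ← hf k hki hkj, sub_self,
      sub_self]
  · rintro b (rfl | rfl)
    · rw [reachBefore_source p hij, mul_zero, sub_zero]
    · rw [reachBefore_target, mul_one, sub_sub_cancel]

theorem sub_mul_escapeProb (hp : of p ∈ rowStochastic ℝ V) (hij : i ≠ j)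
    (hB : IsGloballyReachable p {i, j}) {f : V → ℝ}
    (hf : ∀ k, k ≠ i → k ≠ j → f k = (of p *ᵥ f) k) :
    (f i - f j) * escapeProb p i j = f i - (of p *ᵥ f) i := by
  have hmean : (of p *ᵥ f) i = f i - (f i - f j) * escapeProb p i j :=
    calc (of p *ᵥ f) i
      _ = (of p *ᵥ fun l => f i - (f i - f j) * reachBefore p i j l) i :=
        congrArg (fun g => (of p *ᵥ g) i) (eq_sub_mul_reachBefore hp hij hB hf)
      _ = f i - (f i - f j) * escapeProb p i j := by
        rw [mulVec_const_sub_mul hp, escapeProb_eq_mulVec]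
  rw [hmean, sub_sub_cancel]

theorem commuteTime_mul_escapeProb (hp : of p ∈ rowStochastic ℝ V) (hij : i ≠ j)
    (hi : IsGloballyReachable p {i}) (hj : IsGloballyReachable p {j}) :
    (hitTime p i j + hitTime p j i) * escapeProb p i j = meanReturnTime p i := by
  have hB : IsGloballyReachable p {i, j} := fun x =>
    let ⟨b, hb, hxb⟩ := hj x
    ⟨b, Or.inr hb, hxb⟩
  have h := sub_mul_escapeProb (f := (hitTime p · j) - (hitTime p · i)) hp hij hB
    fun k hki hkj => by
      rw [mulVec_sub, Pi.sub_apply, Pi.sub_apply, hitTime_eq_one_add hp hj hkj,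
        hitTime_eq_one_add hp hi hki, add_sub_add_left_eq_sub]
  simp only [mulVec_sub, Pi.sub_apply, hitTime_self, hitTime_eq_one_add hp hj hij] at h
  rw [hitTime_eq_one_add hp hj hij, meanReturnTime]
  linarith

end EscapeProbability

section WeightedGraph

variable [Fintype V] {w : V → V → ℝ} {i j : V}

theorem vWeight_pos [Nontrivial V] (h0 : ∀ a b, 0 ≤ w a b)
    (hconn : ∀ a b, Relation.ReflTransGen (fun x y => 0 < w x y) a b) (a : V) :
    0 < vWeight w a := by
  obtain ⟨b, hba⟩ := exists_ne a
  obtain rfl | ⟨c, hac, -⟩ := (hconn a b).cases_head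
  · exact absurd rfl hba
  · exact hac.trans_le (single_le_sum (fun l _ => h0 a l) (mem_univ c))

theorem sum_vWeight (w : V → V → ℝ) : ∑ a, vWeight w a = 2 * gWeight w := by
  simp only [vWeight, gWeight]
  ring

theorem isGloballyReachable_walkStep (hpos : ∀ a, 0 < vWeight w a) {B : Set V}
    (hB : IsGloballyReachable w B) : IsGloballyReachable (walkStep w) B := fun x =>
  let ⟨b, hb, hxb⟩ := hB x
  ⟨b, hb, Relation.ReflTransGen.mono (fun a _ hac => div_pos hac (hpos a)) _ _ hxb⟩

theorem vWeight_vecMul_walkStep (hpos : ∀ a, 0 < vWeight w a)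
    (hbal : ∀ b, ∑ a, w a b = vWeight w b) : vWeight w ᵥ* of (walkStep w) = vWeight w := by
  ext b
  rw [← hbal b]
  exact sum_congr rfl fun a _ => mul_div_cancel₀ (w a b) (hpos a).ne'

theorem sub_walkStep_mulVec {k : V} (hk : vWeight w k ≠ 0) (f : V → ℝ) :
    f k - (of (walkStep w) *ᵥ f) k = (∑ l, w k l * (f k - f l)) / vWeight w k :=
  calc f k - (of (walkStep w) *ᵥ f) k
    _ = f k - (∑ l, w k l * f l) / vWeight w k := by
      simp only [of_mulVec_apply, walkStep, div_mul_eq_mul_div, sum_div]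
    _ = (vWeight w k * f k - ∑ l, w k l * f l) / vWeight w k := by
      rw [sub_div, mul_div_cancel_left₀ _ hk]
    _ = (∑ l, w k l * (f k - f l)) / vWeight w k := by
      simp only [vWeight, mul_sub, sum_sub_distrib, sum_mul]

theorem IsUnitPotential.ne {φ : V → ℝ} (hφ : IsUnitPotential w i j φ) : i ≠ j := by
  rintro rfl
  linarith [hφ.2.1, hφ.2.2]

variable [DecidableEq V]

theorem walkStep_mem_rowStochastic (h0 : ∀ a b, 0 ≤ w a b) (hpos : ∀ a, 0 < vWeight w a) :
    of (walkStep w) ∈ rowStochastic ℝ V := by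
  refine mem_rowStochastic_iff_sum.2 ⟨fun a b => div_nonneg (h0 a b) (hpos a).le, fun a => ?_⟩
  calc ∑ b, walkStep w a b
    _ = (∑ b, w a b) / vWeight w a := (sum_div _ _ _).symm
    _ = 1 := div_self (hpos a).ne'

theorem vWeight_mul_commuteTime_mul_escapeProb (h0 : ∀ a b, 0 ≤ w a b)
    (hpos : ∀ a, 0 < vWeight w a) (hbal : ∀ b, ∑ a, w a b = vWeight w b) (hij : i ≠ j)
    (hi : IsGloballyReachable w {i}) (hj : IsGloballyReachable w {j}) :
    vWeight w i * (hitTime (walkStep w) i j + hitTime (walkStep w) j i) *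
      escapeProb (walkStep w) i j = 2 * gWeight w := by
  have hp := walkStep_mem_rowStochastic h0 hpos
  have hi' := isGloballyReachable_walkStep hpos hi
  have hj' := isGloballyReachable_walkStep hpos hj
  rw [mul_assoc, commuteTime_mul_escapeProb hp hij hi' hj',
    stationary_mul_meanReturnTime hp hi' (vWeight_vecMul_walkStep hpos hbal), sum_vWeight]

theorem IsUnitPotential.vWeight_mul_sub_mul_escapeProb {φ : V → ℝ} (hφ : IsUnitPotential w i j φ)
    (h0 : ∀ a b, 0 ≤ w a b) (hpos : ∀ a, 0 < vWeight w a) (hB : IsGloballyReachable w {i, j}) :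
    vWeight w i * (φ i - φ j) * escapeProb (walkStep w) i j = 1 := by
  have hφ_mean : ∀ k, k ≠ i → k ≠ j → φ k = (of (walkStep w) *ᵥ φ) k := fun k hki hkj => by
    rw [← sub_eq_zero, sub_walkStep_mulVec (hpos k).ne', hφ.1 k hki hkj, zero_div]
  calc vWeight w i * (φ i - φ j) * escapeProb (walkStep w) i j
    _ = vWeight w i * (φ i - (of (walkStep w) *ᵥ φ) i) := by
      rw [mul_assoc, sub_mul_escapeProb (walkStep_mem_rowStochastic h0 hpos) hφ.ne
        (isGloballyReachable_walkStep hpos hB) hφ_mean]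
    _ = 1 := by
      rw [sub_walkStep_mulVec (hpos i).ne', hφ.2.1, mul_one_div_cancel (hpos i).ne']

/-- Every finite irreducible Markov chain `p` is the walk of balanced weights, namely of
`w a b = μ a * p a b` with `μ` a stationary measure. -/
theorem escape_probability_formula_general (w : V → V → ℝ) (h0 : ∀ a b, 0 ≤ w a b)
    (hbal : ∀ b, ∑ a, w a b = vWeight w b)
    (hconn : ∀ a b, Relation.ReflTransGen (fun x y => 0 < w x y) a b) (hij : i ≠ j) :
    escapeProb (walkStep w) i j =
        2 * gWeight w /
          (vWeight w i * (hitTime (walkStep w) i j + hitTime (walkStep w) j i)) ∧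
      ∀ φ, IsUnitPotential w i j φ →
        escapeProb (walkStep w) i j = 1 / (vWeight w i * (φ i - φ j)) := by
  have : Nontrivial V := ⟨i, j, hij⟩
  have hpos := vWeight_pos h0 hconn
  have hreach : ∀ {B : Set V} (b), b ∈ B → IsGloballyReachable w B := fun b hb x =>
    ⟨b, hb, hconn x b⟩
  have hG : 2 * gWeight w ≠ 0 := by
    rw [← sum_vWeight]
    exact (sum_pos (fun a _ => hpos a) ⟨i, mem_univ i⟩).ne'
  have hcommute := vWeight_mul_commuteTime_mul_escapeProb h0 hpos hbal hij (hreach i rfl)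
    (hreach j rfl)
  refine ⟨?_, fun φ hφ => ?_⟩
  · exact eq_div_of_mul_eq (left_ne_zero_of_mul (hcommute ▸ hG)) ((mul_comm _ _).trans hcommute)
  · exact eq_one_div_of_mul_eq_one_right
      (hφ.vWeight_mul_sub_mul_escapeProb h0 hpos (hreach i (Or.inl rfl)))

end WeightedGraph

/-- The probability that the walk started at `i` reaches `j` before
returning to `i` is `2·ω(G)/(ω(i)·κ_{ij}) = 1/(ω(i)·R_{ij})`. -/
theorem escape_probability_formula
    {V : Type*} [Fintype V] [DecidableEq V] (w : V → V → ℝ) (hw : IsWeight w)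
    (i j : V) (hij : i ≠ j) (φ : V → ℝ) (hφ : IsUnitPotential w i j φ) :
    escapeProb (walkStep w) i j =
        2 * gWeight w /
          (vWeight w i * (hitTime (walkStep w) i j + hitTime (walkStep w) j i)) ∧
      escapeProb (walkStep w) i j = 1 / (vWeight w i * (φ i - φ j)) :=
  have ⟨hsymm, h0, _, hconn⟩ := hw
  (escape_probability_formula_general w h0 (fun b => sum_congr rfl fun a _ => hsymm a b) hconn
    hij).imp_right (· φ hφ)
end
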